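/- Let η_f, ε_f : f ⊣ f* : B → A be an adjunction in a bicategory B. The following are equivalent: (i) f is separable, i.e. η_f : 1_A → f* ⊗ f is a split monomorphism in B(A,A); (ii) the A-ring S_f = (f* ⊗ f, η_f, m_f) is split, i.e. its unit is a split monomorphism; (iii) for each 0-cell C, the unit of the adjunction B(C,f) ⊣ B(C,f*) : B(C,B) → B(C,A) is a split monomorphism (the functor B(C,f) is separable); (iv) for each 0-cell C, the unit of the adjunction B(f*,C) ⊣ B(f,C) : B(B,C) → B(A,C) is a split monomorphism (the functor B(f*,C) is separable). -/

import Mathlib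

open CategoryTheory CategoryTheory.Bicategory

universe w v u

variable {B : Type u} [Bicategory.{w, v} B]

/-- The functor `𝔹(c, f) = f ⊗ - : 𝔹(c, a) ⥤ 𝔹(c, b)` given by horizontal composition
with a 1-cell `f : a ⟶ b`. -/
@[simps]
def postcompF {a b : B} (c : B) (f : a ⟶ b) : (c ⟶ a) ⥤ (c ⟶ b) where
  obj h := h ≫ f
  map θ := θ ▷ f

/-- The functor `𝔹(f, c) = - ⊗ f : 𝔹(b, c) ⥤ 𝔹(a, c)` given by horizontal composition
with a 1-cell `f : a ⟶ b`. -/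
@[simps]
def precompF {a b : B} (c : B) (f : a ⟶ b) : (b ⟶ c) ⥤ (a ⟶ c) where
  obj h := f ≫ h
  map θ := f ◁ θ

/-!
Both whiskering functors `(a ⟶ a) ⥤ ((c ⟶ a) ⥤ (c ⟶ a))` and `(a ⟶ a) ⥤ ((a ⟶ c) ⥤ (a ⟶ c))`
preserve split monomorphisms, and up to unitors and associators they send a 2-cell
`η : 𝟙 a ⟶ f ≫ g` to the units of (iii) and (iv). Conversely, for `c = a` the component of either
unit at `𝟙 a` is `η` followed by an isomorphism.
-/

section SplitMono

variable {C : Type*} [Category* C] {D : Type*} [Category* D]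

theorem isSplitMono_of_isSplitMono_comp {X Y Z : C} (p : X ⟶ Y) (q : Y ⟶ Z)
    [IsSplitMono (p ≫ q)] : IsSplitMono p :=
  .mk' ⟨q ≫ retraction (p ≫ q), by rw [← Category.assoc, IsSplitMono.id]⟩

theorem isSplitMono_natTrans_app {F G : C ⥤ D} (τ : F ⟶ G) [IsSplitMono τ] (X : C) :
    IsSplitMono (τ.app X) :=
  inferInstanceAs (IsSplitMono (((evaluation C D).obj X).map τ))

theorem isSplitMono_natTrans_iff {F G : C ⥤ D} (τ : F ⟶ G) :
    IsSplitMono τ ↔ ∃ ν : G ⟶ F, ∀ X : C, τ.app X ≫ ν.app X = 𝟙 (F.obj X) where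
  mp _ := ⟨retraction τ, fun X ↦ by rw [← NatTrans.comp_app, IsSplitMono.id, NatTrans.id_app]⟩
  mpr := fun ⟨ν, hν⟩ ↦ .mk' ⟨ν, NatTrans.ext (funext hν)⟩

end SplitMono

section WhiskeringUnits

variable {a b : B} {f : a ⟶ b} {g : b ⟶ a}

/-- The natural transformation `h ⟶ (h ≫ f) ≫ g` induced by a 2-cell `η : 𝟙 a ⟶ f ≫ g`. When `η` is
the unit of an adjunction `f ⊣ g`, this is the unit of `𝔹(c, f) ⊣ 𝔹(c, g)`. It is typed up to the
definitional equality of `postcompF` with `Bicategory.postcomp`. -/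
def postcompUnit (c : B) (η : 𝟙 a ⟶ f ≫ g) :
    𝟭 (c ⟶ a) ⟶ postcompF c f ⋙ postcompF c g :=
  (rightUnitorNatIso c a).inv ≫ (postcomposing c a a).map η ≫ (associatorNatIsoLeft c f g).inv

/-- The natural transformation `h ⟶ f ≫ (g ≫ h)` induced by a 2-cell `η : 𝟙 a ⟶ f ≫ g`. When `η` is
the unit of an adjunction `f ⊣ g`, this is the unit of `𝔹(g, c) ⊣ 𝔹(f, c)`. It is typed up to the
definitional equality of `precompF` with `Bicategory.precomp`. -/
def precompUnit (c : B) (η : 𝟙 a ⟶ f ≫ g) :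
    𝟭 (a ⟶ c) ⟶ precompF c g ⋙ precompF c f :=
  (leftUnitorNatIso a c).inv ≫ (precomposing a a c).map η ≫ (associatorNatIsoRight f g c).hom

theorem isSplitMono_postcompUnit_iff (c : B) (η : 𝟙 a ⟶ f ≫ g) :
    IsSplitMono (postcompUnit c η) ↔
      ∃ ν : postcompF c f ⋙ postcompF c g ⟶ 𝟭 (c ⟶ a),
        ∀ h : c ⟶ a, ((ρ_ h).inv ≫ h ◁ η ≫ (α_ h f g).inv) ≫ ν.app h = 𝟙 h :=
  isSplitMono_natTrans_iff _

theorem isSplitMono_precompUnit_iff (c : B) (η : 𝟙 a ⟶ f ≫ g) :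
    IsSplitMono (precompUnit c η) ↔
      ∃ ν : precompF c g ⋙ precompF c f ⟶ 𝟭 (a ⟶ c),
        ∀ h : a ⟶ c, ((λ_ h).inv ≫ η ▷ h ≫ (α_ f g h).hom) ≫ ν.app h = 𝟙 h :=
  isSplitMono_natTrans_iff _

theorem isSplitMono_postcompUnit (c : B) (η : 𝟙 a ⟶ f ≫ g) [IsSplitMono η] :
    IsSplitMono (postcompUnit c η) :=
  inferInstanceAs (IsSplitMono ((rightUnitorNatIso c a).inv ≫ (postcomposing c a a).map η ≫
    (associatorNatIsoLeft c f g).inv))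

theorem isSplitMono_precompUnit (c : B) (η : 𝟙 a ⟶ f ≫ g) [IsSplitMono η] :
    IsSplitMono (precompUnit c η) :=
  inferInstanceAs (IsSplitMono ((leftUnitorNatIso a c).inv ≫ (precomposing a a c).map η ≫
    (associatorNatIsoRight f g c).hom))

theorem postcompUnit_app_id (η : 𝟙 a ⟶ f ≫ g) :
    (postcompUnit a η).app (𝟙 a) = η ≫ (λ_ f).inv ▷ g := by
  change (ρ_ (𝟙 a)).inv ≫ 𝟙 a ◁ η ≫ (α_ (𝟙 a) f g).inv = _
  rw [← unitors_inv_equal]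
  simp

theorem precompUnit_app_id (η : 𝟙 a ⟶ f ≫ g) :
    (precompUnit a η).app (𝟙 a) = η ≫ f ◁ (ρ_ g).inv := by
  change (λ_ (𝟙 a)).inv ≫ η ▷ 𝟙 a ≫ (α_ f g (𝟙 a)).hom = _
  rw [unitors_inv_equal]
  simp

theorem isSplitMono_of_isSplitMono_postcompUnit (η : 𝟙 a ⟶ f ≫ g)
    [IsSplitMono (postcompUnit a η)] : IsSplitMono η := by
  have : IsSplitMono (η ≫ (λ_ f).inv ▷ g) :=
    postcompUnit_app_id η ▸ isSplitMono_natTrans_app (postcompUnit a η) (𝟙 a)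
  exact isSplitMono_of_isSplitMono_comp η ((λ_ f).inv ▷ g)

theorem isSplitMono_of_isSplitMono_precompUnit (η : 𝟙 a ⟶ f ≫ g)
    [IsSplitMono (precompUnit a η)] : IsSplitMono η := by
  have : IsSplitMono (η ≫ f ◁ (ρ_ g).inv) :=
    precompUnit_app_id η ▸ isSplitMono_natTrans_app (precompUnit a η) (𝟙 a)
  exact isSplitMono_of_isSplitMono_comp η (f ◁ (ρ_ g).inv)

theorem stmt_19_general (η : 𝟙 a ⟶ f ≫ g) :
    [ IsSplitMono η,
      ∀ c : B, IsSplitMono (postcompUnit c η),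
      ∀ c : B, IsSplitMono (precompUnit c η) ].TFAE := by
  tfae_have 1 → 2 := fun _ c ↦ isSplitMono_postcompUnit c η
  tfae_have 2 → 1 := fun h ↦ have := h a; isSplitMono_of_isSplitMono_postcompUnit η
  tfae_have 1 → 3 := fun _ c ↦ isSplitMono_precompUnit c η
  tfae_have 3 → 1 := fun h ↦ have := h a; isSplitMono_of_isSplitMono_precompUnit η
  tfae_finish

end WhiskeringUnits

/-- Let `η_f, ε_f : f ⊣ f* : B → A` be an adjunction in a bicategory
`𝔹`.  The following are equivalent:
(i) `f` is separable, i.e. `η_f : 1_A → f* ⊗ f` is a split monomorphism in `𝔹(A,A)`;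
(ii) the `A`-ring `S_f = (f* ⊗ f, η_f, m_f)` is split, i.e. its unit (which is `η_f`) is
a split monomorphism;
(iii) for each 0-cell `C`, the unit of the adjunction
`𝔹(C,f) ⊣ 𝔹(C,f*) : 𝔹(C,B) → 𝔹(C,A)` is a split monomorphism, i.e. it admits a
natural retraction (`𝔹(C,f)` is separable);
(iv) for each 0-cell `C`, the unit of the adjunction
`𝔹(f*,C) ⊣ 𝔹(f,C) : 𝔹(B,C) → 𝔹(A,C)` is a split monomorphism, i.e. it admits a
natural retraction (`𝔹(f*,C)` is separable). -/
theorem stmt_19 {B : Type u} [Bicategory.{w, v} B] {a b : B}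
    (f : a ⟶ b) (g : b ⟶ a) (adj : Bicategory.Adjunction f g) :
    [ IsSplitMono adj.unit,
      IsSplitMono adj.unit,
      ∀ c : B, ∃ ν : postcompF c f ⋙ postcompF c g ⟶ 𝟭 (c ⟶ a),
        ∀ h : c ⟶ a,
          ((ρ_ h).inv ≫ (h ◁ adj.unit) ≫ (α_ h f g).inv) ≫ ν.app h = 𝟙 h,
      ∀ c : B, ∃ ν : precompF c g ⋙ precompF c f ⟶ 𝟭 (a ⟶ c),
        ∀ h : a ⟶ c,
          ((λ_ h).inv ≫ (adj.unit ▷ h) ≫ (α_ f g h).hom) ≫ ν.app h = 𝟙 h ].TFAE := by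
  simpa only [isSplitMono_postcompUnit_iff, isSplitMono_precompUnit_iff] using
    List.tfae_cons_self.2 (stmt_19_general adj.unit)
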